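/- KKT solution of the linear C-Learner (constrained least squares with a single first-order-error constraint): Let X be an n × d real matrix with G := XᵀX invertible, and let y, h ∈ ℝⁿ with δ := hᵀ X G^{−1} Xᵀ h ≠ 0. Define ŷ := X G^{−1} Xᵀ y (the OLS fitted values), λ̂ := hᵀ(y − ŷ)/δ, and θ̂ := G^{−1} Xᵀ (y + λ̂·h). Then (i) θ̂ is feasible: hᵀ(y − X θ̂) = 0; and (ii) θ̂ is optimal: for every θ ∈ ℝᵈ with hᵀ(y − X θ) = 0, one has ‖y − X θ̂‖² ≤ ‖y − X θ‖². Hence θ̂ solves min_θ {½‖y − Xθ‖² : hᵀ(y − Xθ) = 0}, and equals the OLS coefficient with respect to the pseudo-label y + λ̂·h. -/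

import Mathlib

open Matrix Finset

/-- The Gram matrix `G = XᵀX`. -/
noncomputable def gramCL {n d : ℕ} (X : Matrix (Fin n) (Fin d) ℝ) :
    Matrix (Fin d) (Fin d) ℝ := Xᵀ * X

/-- The OLS fitted values `ŷ = X G⁻¹ Xᵀ y`. -/
noncomputable def olsFitCL {n d : ℕ} (X : Matrix (Fin n) (Fin d) ℝ) (y : Fin n → ℝ) :
    Fin n → ℝ := X *ᵥ ((gramCL X)⁻¹ *ᵥ (Xᵀ *ᵥ y))

/-- The dual variable `λ̂ = hᵀ(y − ŷ)/δ` where `δ = hᵀ X G⁻¹ Xᵀ h`. -/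
noncomputable def lamCL {n d : ℕ} (X : Matrix (Fin n) (Fin d) ℝ) (y h : Fin n → ℝ) : ℝ :=
  (h ⬝ᵥ (y - olsFitCL X y)) / (h ⬝ᵥ (X *ᵥ ((gramCL X)⁻¹ *ᵥ (Xᵀ *ᵥ h))))

/-- The constrained least squares solution `θ̂ = G⁻¹ Xᵀ (y + λ̂·h)`,
the OLS coefficient with respect to the pseudo-label `y + λ̂·h`. -/
noncomputable def thetaCL {n d : ℕ} (X : Matrix (Fin n) (Fin d) ℝ) (y h : Fin n → ℝ) :
    Fin d → ℝ := (gramCL X)⁻¹ *ᵥ (Xᵀ *ᵥ (y + lamCL X y h • h))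

section LeastSquares

variable {R m n : Type*} [CommRing R] [LinearOrder R] [IsStrictOrderedRing R]
  [Fintype m] [Fintype n]

theorem sum_sq_le_sum_sq_of_dotProduct_sub_eq_zero {u v : m → R} (huv : u ⬝ᵥ (v - u) = 0) :
    ∑ i, u i ^ 2 ≤ ∑ i, v i ^ 2 :=
  calc
    ∑ i, u i ^ 2 = ∑ i, u i ^ 2 + 2 * (u ⬝ᵥ (v - u)) := by rw [huv, mul_zero, add_zero]
    _ = ∑ i, (u i ^ 2 + 2 * (u i * (v i - u i))) := by
      simp only [dotProduct, Pi.sub_apply, mul_sum, sum_add_distrib]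
    _ ≤ ∑ i, v i ^ 2 := sum_le_sum fun i _ => by linarith [sq_nonneg (v i - u i)]

/-- Sufficiency of the KKT conditions: the change of residual `X (θ₀ - θ)` is orthogonal to
`y + w - X θ₀` by the normal equations and to `w` by the constraint, hence to `y - X θ₀`. -/
theorem sum_sq_residual_le_of_normal_equations {X : Matrix m n R} {y w : m → R} {θ₀ θ : n → R}
    (hnormal : Xᵀ *ᵥ (y + w - X *ᵥ θ₀) = 0)
    (hw : w ⬝ᵥ (y - X *ᵥ θ) = w ⬝ᵥ (y - X *ᵥ θ₀)) :
    ∑ i, (y i - (X *ᵥ θ₀) i) ^ 2 ≤ ∑ i, (y i - (X *ᵥ θ) i) ^ 2 := by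
  have hchange : y - X *ᵥ θ - (y - X *ᵥ θ₀) = X *ᵥ (θ₀ - θ) := by
    rw [mulVec_sub, sub_sub_sub_cancel_left]
  have horth_pseudo : (y + w - X *ᵥ θ₀) ⬝ᵥ (X *ᵥ (θ₀ - θ)) = 0 := by
    rw [dotProduct_mulVec, ← mulVec_transpose, hnormal, zero_dotProduct]
  have horth_w : w ⬝ᵥ (X *ᵥ (θ₀ - θ)) = 0 := by
    rw [← hchange, dotProduct_sub, hw, sub_self]
  have horth : (y - X *ᵥ θ₀) ⬝ᵥ (y - X *ᵥ θ - (y - X *ᵥ θ₀)) = 0 := by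
    rwa [add_sub_right_comm, add_dotProduct, horth_w, add_zero, ← hchange] at horth_pseudo
  exact sum_sq_le_sum_sq_of_dotProduct_sub_eq_zero horth

end LeastSquares

section LinearCLearner

variable {n d : ℕ} {X : Matrix (Fin n) (Fin d) ℝ}

theorem olsFitCL_add (y z : Fin n → ℝ) :
    olsFitCL X (y + z) = olsFitCL X y + olsFitCL X z := by
  simp only [olsFitCL, mulVec_add]

theorem olsFitCL_smul (c : ℝ) (y : Fin n → ℝ) :
    olsFitCL X (c • y) = c • olsFitCL X y := by
  simp only [olsFitCL, mulVec_smul]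

theorem transpose_mulVec_sub_olsFitCL (hG : IsUnit (gramCL X).det) (y : Fin n → ℝ) :
    Xᵀ *ᵥ (y - olsFitCL X y) = 0 := by
  have hfit : Xᵀ *ᵥ olsFitCL X y = Xᵀ *ᵥ y :=
    calc
      Xᵀ *ᵥ olsFitCL X y = gramCL X *ᵥ ((gramCL X)⁻¹ *ᵥ (Xᵀ *ᵥ y)) := mulVec_mulVec _ _ _
      _ = Xᵀ *ᵥ y := by rw [mulVec_mulVec, mul_nonsing_inv _ hG, one_mulVec]
  rw [mulVec_sub, hfit, sub_self]

theorem mulVec_thetaCL (y h : Fin n → ℝ) :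
    X *ᵥ thetaCL X y h = olsFitCL X (y + lamCL X y h • h) :=
  rfl

theorem dotProduct_sub_mulVec_thetaCL {h : Fin n → ℝ} (hδ : h ⬝ᵥ olsFitCL X h ≠ 0)
    (y : Fin n → ℝ) : h ⬝ᵥ (y - X *ᵥ thetaCL X y h) = 0 := by
  have hlam : lamCL X y h * (h ⬝ᵥ olsFitCL X h) = h ⬝ᵥ (y - olsFitCL X y) :=
    div_mul_cancel₀ _ hδ
  rw [mulVec_thetaCL, olsFitCL_add, olsFitCL_smul, ← sub_sub, dotProduct_sub, dotProduct_smul,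
    smul_eq_mul, hlam, sub_self]

end LinearCLearner

/-- KKT solution of the linear C-Learner (constrained least squares with a single
first-order-error constraint): with `G = XᵀX` invertible and
`δ = hᵀ X G⁻¹ Xᵀ h ≠ 0`, the vector `θ̂ = G⁻¹ Xᵀ (y + λ̂ h)` is feasible
for the constraint `hᵀ(y − Xθ) = 0` and minimizes `‖y − Xθ‖²` among feasible `θ`. -/
theorem linear_clearner_kkt (n d : ℕ)
    (X : Matrix (Fin n) (Fin d) ℝ) (y h : Fin n → ℝ)
    (hG : IsUnit (gramCL X).det)
    (hδ : h ⬝ᵥ (X *ᵥ ((gramCL X)⁻¹ *ᵥ (Xᵀ *ᵥ h))) ≠ 0) :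
    h ⬝ᵥ (y - X *ᵥ thetaCL X y h) = 0 ∧
    ∀ θ : Fin d → ℝ, h ⬝ᵥ (y - X *ᵥ θ) = 0 →
      ∑ i, (y i - (X *ᵥ thetaCL X y h) i) ^ 2 ≤ ∑ i, (y i - (X *ᵥ θ) i) ^ 2 := by
  have hfeas : h ⬝ᵥ (y - X *ᵥ thetaCL X y h) = 0 := dotProduct_sub_mulVec_thetaCL hδ y
  refine ⟨hfeas, fun θ hθ => ?_⟩
  have hnormal : Xᵀ *ᵥ (y + lamCL X y h • h - X *ᵥ thetaCL X y h) = 0 := by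
    rw [mulVec_thetaCL, transpose_mulVec_sub_olsFitCL hG]
  have hconstraint : (lamCL X y h • h) ⬝ᵥ (y - X *ᵥ θ) =
      (lamCL X y h • h) ⬝ᵥ (y - X *ᵥ thetaCL X y h) := by
    rw [smul_dotProduct, smul_dotProduct, hθ, hfeas]
  exact sum_sq_residual_le_of_normal_equations hnormal hconstraint
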